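/- Let (X, x0) be a pointed compact Hausdorff space, let 𝕋 denote the circle, and let ΣX denote the reduced suspension of X. Then gsr(C(𝕋 × X)) = max{gsr(C(X)), gsr(C(ΣX))} (as elements of ℕ ∪ {∞}), where C(Z) denotes the C*-algebra of continuous complex-valued functions on a compact Hausdorff space Z. -/

import Mathlib

/-!
For every `m`, `GL_m` acts transitively on `Lg_m` over `C(𝕋 × X)` if and only if it does so over
both `C(X)` and `C(ΣX)` (`GLtrans_circle_prod_iff`); the equality of general stable ranks is immediate
from this.

An element of `Lg_m(C(Z))` is a map `Z → ℂ^m ∖ {0}`, and transitivity says that every such map is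
`z ↦ M z e` for a fixed basis vector `e` and some `M : Z → GL_m(ℂ)`. The space `ΣX` is the quotient
of `𝕋 × X` by the wedge `W = ({1} × X) ∪ (𝕋 × {x0})` (`exists_quotient_map`).

* From `𝕋 × X` to `X`: `X` is a retract of `𝕋 × X`.
* From `𝕋 × X` to `ΣX`: if `M : 𝕋 × X → GL_m` lifts `v ∘ q`, then, with `c = M (1, x0)`, the matrix
  `M (t, x) * (M (1, x))⁻¹ * c * (M (t, x0))⁻¹ * c` is another lift, and it is equal to `c` on `W`.
* From `X` and `ΣX` to `𝕋 × X`: a lift on `{1} × X` reduces to the case where `v` is equal to `e` on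
  `{1} × X`. A lift on `𝕋 × {x0}`, normalised to be `1` at the base point, then makes `v` equal to
  `e` on all of `W`, so that `v` comes from `ΣX`.

The last step needs transitivity over `C(𝕋)`. That algebra has topological stable rank one
(`dense_units_circle`), and transitivity follows by perturbing one coordinate to a unit and applying
rank-one updates of the identity matrix (`GLtrans_of_dense_units`).
-/

open scoped unitInterval

noncomputable section

/-- The set of left unimodular vectors in `A^m`. -/
def Lg (m : ℕ) (A : Type*) [Ring A] : Set (Fin m → A) :=
  {v | ∃ w : Fin m → A, ∑ i, w i * v i = 1}

/-- `GL_m(A)` acts transitively on `Lg_m(A)`. -/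
def GLtrans (m : ℕ) (A : Type*) [Ring A] : Prop :=
  ∀ v ∈ Lg m A, ∀ w ∈ Lg m A,
    ∃ M : Matrix (Fin m) (Fin m) A, IsUnit M ∧ M.mulVec v = w

/-- The general stable rank: the least `n ≥ 1` such that `GL_m(A)` acts transitively on
`Lg_m(A)` for all `m ≥ n` (and `∞` if no such `n` exists). -/
def gsr (A : Type*) [Ring A] : ℕ∞ :=
  sInf {N : ℕ∞ | ∃ n : ℕ, N = n ∧ 1 ≤ n ∧ ∀ m : ℕ, n ≤ m → GLtrans m A}

/-- The connected stable rank: the least `n ≥ 1` such that `Lg_m(A)` is connected for all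
`m ≥ n` (and `∞` if no such `n` exists). -/
def csr (A : Type*) [Ring A] [TopologicalSpace A] : ℕ∞ :=
  sInf {N : ℕ∞ | ∃ n : ℕ, N = n ∧ 1 ≤ n ∧ ∀ m : ℕ, n ≤ m → IsConnected (Lg m A)}

/-- The gluing relation defining the reduced suspension `ΣX`. -/
def suspRel (X : Type*) (x0 : X) : I × X → I × X → Prop := fun a b =>
  (a.1 = 0 ∧ b = (0, x0)) ∨ (a.1 = 1 ∧ b = (1, x0)) ∨ (a.2 = x0 ∧ b = (0, x0))

/-- The reduced suspension of a pointed space. -/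
abbrev Susp (X : Type*) [TopologicalSpace X] (x0 : X) : Type _ :=
  Quot (suspRel X x0)


/-! ### Invertible matrices moving unimodular vectors -/

/-- The rank-one update `1 + (w - v) r / (r · v)` sends `v` to `w`, and its determinant is
`(r · w) / (r · v)`. -/
lemma exists_isUnit_mulVec_of_dotProduct {A : Type*} [CommRing A] {m : ℕ} (r v w : Fin m → A)
    (hv : IsUnit (r ⬝ᵥ v)) (hw : IsUnit (r ⬝ᵥ w)) :
    ∃ M : Matrix (Fin m) (Fin m) A, IsUnit M ∧ M.mulVec v = w := by
  obtain ⟨c, hc⟩ := hv.exists_left_inv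
  refine ⟨1 + Matrix.replicateCol Unit (w - v) * Matrix.replicateRow Unit (c • r), ?_, ?_⟩
  · rw [Matrix.isUnit_iff_isUnit_det, Matrix.det_one_add_replicateCol_mul_replicateRow,
      smul_dotProduct, dotProduct_sub, smul_eq_mul, mul_sub, hc]
    have : 1 + (c * r ⬝ᵥ w - 1) = c * r ⬝ᵥ w := by ring
    rw [this]
    exact (IsUnit.of_mul_eq_one _ hc).mul hw
  · rw [Matrix.add_mulVec, Matrix.one_mulVec, ← Matrix.vecMulVec_eq]
    ext i
    have h : ∑ j, c * r j * v j = 1 := by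
      rw [← hc, dotProduct, Finset.mul_sum]; exact Finset.sum_congr rfl fun j _ => mul_assoc _ _ _
    simp only [Matrix.mulVec, dotProduct, Matrix.vecMulVec_apply, Pi.add_apply, Pi.sub_apply,
      Pi.smul_apply, smul_eq_mul, mul_assoc (w i - v i), ← Finset.mul_sum, h]
    ring

lemma single_mem_Lg (A : Type*) [Ring A] (k : ℕ) (i : Fin k) : Pi.single i (1 : A) ∈ Lg k A :=
  ⟨Pi.single i 1, by simp [Pi.single_apply]⟩

lemma GLtrans_zero (A : Type*) [Ring A] [Nontrivial A] : GLtrans 0 A := by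
  rintro v ⟨w, hw⟩
  simp at hw

/-- Transitivity may be tested on a single orbit. -/
lemma GLtrans_iff_units (A : Type*) [Ring A] (k : ℕ) (e : Fin k → A) (he : e ∈ Lg k A) :
    GLtrans k A ↔ ∀ v ∈ Lg k A, ∃ M : (Matrix (Fin k) (Fin k) A)ˣ, M.1.mulVec e = v := by
  constructor
  · intro h v hv
    obtain ⟨M, hM, h⟩ := h e he v hv
    exact ⟨hM.unit, h⟩
  · intro h v hv w hw
    obtain ⟨M, rfl⟩ := h v hv
    obtain ⟨N, rfl⟩ := h w hw
    refine ⟨(N * M⁻¹ : (Matrix (Fin k) (Fin k) A)ˣ), Units.isUnit _, ?_⟩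
    rw [Matrix.mulVec_mulVec, ← Units.val_mul, inv_mul_cancel_right]

lemma GLtrans_one (A : Type*) [CommRing A] : GLtrans 1 A := by
  rintro v ⟨a, ha⟩ w ⟨b, hb⟩
  refine exists_isUnit_mulVec_of_dotProduct (fun _ => 1) v w ?_ ?_
  · exact IsUnit.of_mul_eq_one_right (a 0) (by simpa [dotProduct] using ha)
  · exact IsUnit.of_mul_eq_one_right (b 0) (by simpa [dotProduct] using hb)

/-- Over a commutative Banach algebra in which the units are dense (topological stable rank one),
`GL_m` acts transitively on `Lg_m`: perturb the first coordinate of `v` to a unit, and then move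
the vector to the second basis vector by rank-one updates. -/
lemma GLtrans_of_dense_units {A : Type*} [NormedCommRing A] [CompleteSpace A]
    (hd : Dense {a : A | IsUnit a}) (m : ℕ) : GLtrans (m + 2) A := by
  have key : ∀ v ∈ Lg (m + 2) A, ∃ M : (Matrix (Fin (m + 2)) (Fin (m + 2)) A)ˣ,
      M.1.mulVec (Pi.single 1 1) = v := by
    rintro v ⟨r, hr⟩
    have hU : IsOpen {x : A | IsUnit (1 + r 0 * (x - v 0))} :=
      Units.isOpen.preimage (by fun_prop)
    obtain ⟨u, hu1, hu2⟩ := hd.inter_open_nonempty _ hU ⟨v 0, by simp⟩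
    simp only [Set.mem_ofPred_eq] at hu1 hu2
    obtain ⟨M₁, h₁, e₁⟩ := exists_isUnit_mulVec_of_dotProduct r (Function.update v 0 u) v
      (by
        have : r ⬝ᵥ Function.update v 0 u = 1 + r 0 * (u - v 0) := by
          rw [← hr, dotProduct, Fin.sum_univ_succ, Fin.sum_univ_succ (fun i => r i * v i)]
          simp only [Function.update_self, ne_eq, Fin.succ_ne_zero, not_false_eq_true,
            Function.update_of_ne]
          ring
        rwa [this]) (by rw [dotProduct, hr]; exact isUnit_one)
    obtain ⟨M₂, h₂, e₂⟩ := exists_isUnit_mulVec_of_dotProduct (Pi.single 0 1)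
      (Pi.single 0 u + Pi.single 1 1) (Function.update v 0 u) (by simpa using hu2)
      (by simpa using hu2)
    obtain ⟨M₃, h₃, e₃⟩ := exists_isUnit_mulVec_of_dotProduct (Pi.single 1 1)
      (Pi.single 1 1) (Pi.single 0 u + Pi.single 1 1 : Fin (m + 2) → A) (by simp) (by simp)
    refine ⟨h₁.unit * h₂.unit * h₃.unit, ?_⟩
    simp only [Units.val_mul, IsUnit.unit_spec, ← Matrix.mulVec_mulVec, e₁, e₂, e₃]
  exact (GLtrans_iff_units A _ _ (single_mem_Lg A _ 1)).2 key

/-! ### Units are dense in the functions on the circle -/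

/-- A trigonometric polynomial is a smooth function of one real variable, so its range in the
two-dimensional `ℂ` omits arbitrarily small numbers; subtracting one of these makes it nowhere
zero. -/
lemma dense_units_circle : Dense {f : C(Circle, ℂ) | IsUnit f} := by
  have : Fact (0 < 2 * Real.pi) := ⟨by positivity⟩
  rw [Metric.dense_iff]
  intro f ε hε
  let h : C(AddCircle (2 * Real.pi), Circle) := ⟨_, AddCircle.homeomorphCircle'.continuous⟩
  let h' : C(Circle, AddCircle (2 * Real.pi)) := ⟨_, AddCircle.homeomorphCircle'.symm.continuous⟩
  have hf : f.comp h ∈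
      (Submodule.span ℂ (Set.range <| @fourier (2 * Real.pi))).topologicalClosure := by
    rw [span_fourier_closure_eq_top]; trivial
  obtain ⟨g, hg, hgf⟩ := Metric.mem_closure_iff.1 hf (ε / 2) (by positivity)
  have hsm : ContDiff ℝ 1 (fun x : ℝ => g (x : AddCircle (2 * Real.pi))) := by
    clear hgf
    induction hg using Submodule.span_induction with
    | mem x hx =>
      obtain ⟨n, rfl⟩ := hx
      simp only [fourier_coe_apply]
      have : ContDiff ℝ 1 (fun x : ℝ => (x : ℂ)) := Complex.ofRealCLM.contDiff
      fun_prop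
    | zero => exact contDiff_const
    | add x y _ _ hx hy => exact hx.add hy
    | smul a x _ hx => exact contDiff_const.smul hx
  obtain ⟨c, hc, hcε⟩ := (hsm.dense_compl_range_of_finrank_lt_finrank
    (by simp)).exists_dist_lt 0 (half_pos hε)
  refine ⟨(g - ContinuousMap.const _ c).comp h', ?_, ?_⟩
  · rw [Metric.mem_ball, ContinuousMap.dist_lt_iff hε]
    intro z
    have h1 := (ContinuousMap.dist_apply_le_dist (f := f.comp h) (g := g) (h' z)).trans_lt hgf
    have h2 : h (h' z) = z := AddCircle.homeomorphCircle'.apply_symm_apply z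
    simp only [ContinuousMap.comp_apply, h2] at h1
    rw [dist_comm, dist_eq_norm] at h1
    rw [dist_comm, dist_eq_norm, sub_zero] at hcε
    rw [dist_eq_norm]
    simp only [ContinuousMap.comp_apply, ContinuousMap.sub_apply, ContinuousMap.const_apply]
    calc ‖g (h' z) - c - f z‖ = ‖(g (h' z) - f z) - c‖ := by ring_nf
      _ ≤ ‖g (h' z) - f z‖ + ‖c‖ := norm_sub_le _ _
      _ < ε := by linarith
  · rw [Set.mem_ofPred_eq, ContinuousMap.isUnit_iff_forall_ne_zero]
    intro z hz
    apply hc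
    obtain ⟨x, hx⟩ := QuotientAddGroup.mk_surjective (h' z)
    refine ⟨x, ?_⟩
    simp only [ContinuousMap.comp_apply, ContinuousMap.sub_apply, ContinuousMap.const_apply] at hz
    rw [← hx] at hz
    exact sub_eq_zero.1 hz

lemma GLtrans_circle : ∀ m : ℕ, GLtrans m C(Circle, ℂ)
  | 0 => GLtrans_zero _
  | 1 => GLtrans_one _
  | m + 2 => GLtrans_of_dense_units dense_units_circle m

/-! ### Functoriality of `GL_m(C(Z))` and `Lg_m(C(Z))` -/

/-- The ring homomorphism `C(Z) → C(Y)` induced by a continuous map `Y → Z`. -/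
def pb {Y Z : Type*} [TopologicalSpace Y] [TopologicalSpace Z] (f : C(Y, Z)) :
    C(Z, ℂ) →+* C(Y, ℂ) :=
  (ContinuousMap.compRightAlgHom ℂ ℂ f).toRingHom

/-- The group homomorphism `GL_m(C(Z)) → GL_m(C(Y))` induced by a continuous map `Y → Z`. -/
def glMap {Y Z : Type*} [TopologicalSpace Y] [TopologicalSpace Z] {k : ℕ} (f : C(Y, Z)) :
    (Matrix (Fin k) (Fin k) C(Z, ℂ))ˣ →* (Matrix (Fin k) (Fin k) C(Y, ℂ))ˣ :=
  Units.map ((pb f).mapMatrix (m := Fin k)).toMonoidHom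

section Functoriality

variable {Y Z W : Type*} [TopologicalSpace Y] [TopologicalSpace Z] [TopologicalSpace W] {k : ℕ}

lemma pb_apply (f : C(Y, Z)) (a : C(Z, ℂ)) (y : Y) : pb f a y = a (f y) := rfl

lemma glMap_comp (f : C(Y, Z)) (g : C(Z, W)) (M : (Matrix (Fin k) (Fin k) C(W, ℂ))ˣ) :
    glMap f (glMap g M) = glMap (g.comp f) M := Units.ext rfl

lemma pb_comp (f : C(Y, Z)) (g : C(Z, W)) (v : Fin k → C(W, ℂ)) :
    pb f ∘ (pb g ∘ v) = pb (g.comp f) ∘ v := rfl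

lemma glMap_mulVec (f : C(Y, Z)) (M : (Matrix (Fin k) (Fin k) C(Z, ℂ))ˣ) (v : Fin k → C(Z, ℂ)) :
    (glMap f M).1.mulVec (pb f ∘ v) = pb f ∘ (M.1.mulVec v) := by
  ext1 i
  exact ((pb f).map_mulVec M.1 v i).symm

lemma pb_single (f : C(Y, Z)) (i : Fin k) :
    pb f ∘ (Pi.single i 1 : Fin k → C(Z, ℂ)) = Pi.single i 1 := by
  ext1 j
  by_cases h : j = i
  · subst h; simp
  · simp [h]

/-- A vector of functions is unimodular iff the functions have no common zero. -/
lemma mem_Lg_iff (v : Fin k → C(Z, ℂ)) : v ∈ Lg k C(Z, ℂ) ↔ ∀ z, ∃ i, v i z ≠ 0 := by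
  constructor
  · rintro ⟨w, hw⟩ z
    by_contra! h
    have := congrArg (fun f : C(Z, ℂ) => f z) hw
    simp [ContinuousMap.sum_apply, h] at this
  · intro h
    have hu : IsUnit (∑ i, star (v i) * v i) := by
      rw [ContinuousMap.isUnit_iff_forall_ne_zero]
      intro z hz
      obtain ⟨i, hi⟩ := h z
      have h1 : ((∑ i, ‖v i z‖ ^ 2 : ℝ) : ℂ) = 0 := by
        rw [← hz]
        simp [ContinuousMap.sum_apply, Complex.conj_mul']
      rw [Complex.ofReal_eq_zero, Finset.sum_eq_zero_iff_of_nonneg (fun _ _ => by positivity)] at h1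
      exact hi (by simpa using h1 i (Finset.mem_univ i))
    obtain ⟨c, hc⟩ := hu.exists_left_inv
    exact ⟨fun i => c * star (v i), by simpa [Finset.mul_sum, mul_assoc] using hc⟩

lemma pb_mem_Lg (f : C(Y, Z)) {v : Fin k → C(Z, ℂ)} (hv : v ∈ Lg k C(Z, ℂ)) :
    pb f ∘ v ∈ Lg k C(Y, ℂ) := by
  rw [mem_Lg_iff] at hv ⊢
  exact fun y => hv (f y)

lemma mulVec_mem_Lg {v : Fin k → C(Z, ℂ)} (hv : v ∈ Lg k C(Z, ℂ))
    (M : (Matrix (Fin k) (Fin k) C(Z, ℂ))ˣ) : M.1.mulVec v ∈ Lg k C(Z, ℂ) := by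
  obtain ⟨w, hw⟩ := hv
  refine ⟨Matrix.vecMul w M.2, ?_⟩
  change Matrix.vecMul w M.2 ⬝ᵥ M.1.mulVec v = 1
  rw [← Matrix.dotProduct_mulVec, Matrix.mulVec_mulVec, M.inv_val, Matrix.one_mulVec]
  exact hw

lemma inv_mulVec_eq {A : Type*} [Ring A] {M : (Matrix (Fin k) (Fin k) A)ˣ} {v w : Fin k → A}
    (h : M.1.mulVec v = w) : (M⁻¹).1.mulVec w = v := by
  rw [← h, Matrix.mulVec_mulVec, Units.inv_mul, Matrix.one_mulVec]

/-- Transitivity passes to retracts. -/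
lemma GLtrans_of_retract (i : C(Y, Z)) (r : C(Z, Y)) (h : r.comp i = ContinuousMap.id Y)
    (H : GLtrans k C(Z, ℂ)) : GLtrans k C(Y, ℂ) := by
  intro v hv w hw
  obtain ⟨M, ⟨M, rfl⟩, hM⟩ := H _ (pb_mem_Lg r hv) _ (pb_mem_Lg r hw)
  refine ⟨_, (glMap i M).isUnit, ?_⟩
  have h1 := glMap_mulVec i M (pb r ∘ v)
  rw [hM, pb_comp, pb_comp, h] at h1
  exact h1

end Functoriality

/-! ### The quotient map from the product to the reduced suspension -/

/-- `ΣX` is the quotient of `𝕋 × X` by the wedge `({1} × X) ∪ (𝕋 × {x0})`: the functions on `𝕋 × X`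
that are constant on the wedge descend. Both spaces are quotients of `[0,1] × X`. -/
lemma exists_quotient_map {X : Type*} [TopologicalSpace X] [CompactSpace X] [T2Space X] (x0 : X) :
    ∃ q : C(Circle × X, Susp X x0), Function.Surjective q ∧
      (∀ x, q (1, x) = q (1, x0)) ∧ (∀ t, q (t, x0) = q (1, x0)) ∧
      ∀ f : C(Circle × X, ℂ), (∀ x, f (1, x) = f (1, x0)) → (∀ t, f (t, x0) = f (1, x0)) →
        ∃ g : C(Susp X x0, ℂ), pb q g = f := by
  let e : C(I × X, Circle × X) := ⟨fun p => (Circle.exp (2 * Real.pi * p.1), p.2), by fun_prop⟩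
  have hes : Function.Surjective e := by
    rintro ⟨z, x⟩
    obtain ⟨θ, rfl⟩ := Circle.exp_surjective z
    refine ⟨(⟨Int.fract (θ / (2 * Real.pi)), Int.fract_nonneg _, (Int.fract_lt_one _).le⟩, x), ?_⟩
    refine Prod.ext (Circle.exp_eq_exp.2 ⟨-⌊θ / (2 * Real.pi)⌋, ?_⟩) rfl
    have := Real.pi_ne_zero
    simp only [Int.fract]
    push_cast
    field_simp
    ring
  have hq : Topology.IsQuotientMap e :=
    Topology.IsQuotientMap.of_surjective_continuous hes e.continuous
  let mk : C(I × X, Susp X x0) := ⟨Quot.mk _, continuous_quot_mk⟩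
  have r0 : ∀ x, mk (0, x) = mk (0, x0) := fun x => Quot.sound (Or.inl ⟨rfl, rfl⟩)
  have rx : ∀ s, mk (s, x0) = mk (0, x0) := fun s => Quot.sound (Or.inr (Or.inr ⟨rfl, rfl⟩))
  have r1 : ∀ x, mk (1, x) = mk (0, x0) := fun x =>
    (Quot.sound (Or.inr (Or.inl ⟨rfl, rfl⟩)) : mk (1, x) = mk (1, x0)).trans (rx 1)
  have e0 : ∀ x, e (0, x) = (1, x) := fun x => by simp [e]
  have e1 : ∀ x, e (1, x) = (1, x) := fun x => by simp [e]
  have hfac : Function.FactorsThrough mk e := by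
    rintro ⟨s, x⟩ ⟨t, y⟩ h
    obtain ⟨h1, rfl⟩ : Circle.exp (2 * Real.pi * s) = Circle.exp (2 * Real.pi * t) ∧ x = y :=
      Prod.ext_iff.1 h
    obtain ⟨n, hn⟩ := Circle.exp_eq_exp.1 h1
    have hst : (s : ℝ) = t + n :=
      mul_left_cancel₀ (by positivity : (2 * Real.pi) ≠ 0) (by rw [hn]; ring)
    have hs := s.2
    have ht := t.2
    simp only [Set.mem_Icc] at hs ht
    have hn1 : (n : ℝ) ≤ 1 := by linarith
    have hn2 : (-1 : ℝ) ≤ n := by linarith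
    have hn1' : n ≤ 1 := by exact_mod_cast hn1
    have hn2' : -1 ≤ n := by exact_mod_cast hn2
    interval_cases n
    · have hs0 : s = 0 := Subtype.ext (by push_cast at hst; simp only [Set.Icc.coe_zero]; linarith)
      have ht1 : t = 1 := Subtype.ext (by push_cast at hst; simp only [Set.Icc.coe_one]; linarith)
      rw [hs0, ht1, r0, r1]
    · have : s = t := Subtype.ext (by simpa using hst)
      rw [this]
    · have hs0 : s = 1 := Subtype.ext (by push_cast at hst; simp only [Set.Icc.coe_one]; linarith)
      have ht1 : t = 0 := Subtype.ext (by push_cast at hst; simp only [Set.Icc.coe_zero]; linarith)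
      rw [hs0, ht1, r0, r1]
  let q : C(Circle × X, Susp X x0) := hq.lift mk hfac
  have hqe : ∀ p, q (e p) = mk p := fun p => DFunLike.congr_fun (hq.lift_comp mk hfac) p
  refine ⟨q, ?_, ?_, ?_, ?_⟩
  · intro y
    obtain ⟨p, rfl⟩ := Quot.exists_rep y
    exact ⟨e p, hqe p⟩
  · intro x
    rw [← e0 x, ← e0 x0, hqe, hqe, r0]
  · intro t
    obtain ⟨⟨s, x⟩, hp⟩ := hes (t, x0)
    have hx : x = x0 := (Prod.ext_iff.1 hp).2
    subst hx
    rw [← hp, ← e0 x, hqe, hqe, rx]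
  · intro f h1 h2
    have h2' : ∀ s, f (e (s, x0)) = f (1, x0) := fun s => h2 _
    refine ⟨⟨Quot.lift (fun p => f (e p)) ?_, ?_⟩, ?_⟩
    · rintro ⟨s, x⟩ b (⟨hs, rfl⟩ | ⟨hs, rfl⟩ | ⟨hs, rfl⟩)
      · obtain rfl : s = 0 := hs
        rw [e0, e0, h1]
      · obtain rfl : s = 1 := hs
        rw [e1, e1, h1]
      · obtain rfl : x = x0 := hs
        rw [h2', h2']
    · exact continuous_quot_lift _ (f.continuous.comp e.continuous)
    · ext z
      obtain ⟨p, rfl⟩ := hes z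
      rw [pb_apply, hqe]
      rfl

/-! ### Comparison of the three algebras -/

/-- If `M : 𝕋 × X → GL_k` lifts the pullback of a vector-valued map on `ΣX`, then it can be
corrected on the right by matrices fixing the basis vector so as to become constant on the wedge
`({1} × X) ∪ (𝕋 × {x0})`, whence it descends to `ΣX`. Conversely, given a map on `𝕋 × X`, a lift
of its restriction to `{1} × X` and then a lift of the restriction of the resulting map to
`𝕋 × {x0}` reduce it to a map that is constant on the wedge, i.e. a map on `ΣX`. -/
lemma GLtrans_circle_prod_iff {X : Type*} [TopologicalSpace X] [CompactSpace X] [T2Space X]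
    (x0 : X) (k : ℕ) :
    GLtrans k C(Circle × X, ℂ) ↔ GLtrans k C(X, ℂ) ∧ GLtrans k C(Susp X x0, ℂ) := by
  have : Nonempty X := ⟨x0⟩
  have : Nonempty (Susp X x0) := ⟨Quot.mk _ (0, x0)⟩
  obtain _ | k := k
  · simp [GLtrans_zero]
  let i : C(X, Circle × X) := ⟨fun x => (1, x), by fun_prop⟩
  let π : C(Circle × X, X) := ⟨Prod.snd, by fun_prop⟩
  let j : C(Circle, Circle × X) := ⟨fun t => (t, x0), by fun_prop⟩
  let p : C(Circle × X, Circle) := ⟨Prod.fst, by fun_prop⟩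
  -- the idempotent self-maps of `𝕋 × X` onto the two halves of the wedge
  let a : C(Circle × X, Circle × X) := i.comp π
  let b : C(Circle × X, Circle × X) := j.comp p
  obtain ⟨q, hqs, hq1, hq0, hql⟩ := exists_quotient_map x0
  have hinj : Function.Injective (pb q) := fun f g h => by
    ext y
    obtain ⟨z, rfl⟩ := hqs y
    exact DFunLike.congr_fun h z
  have hqa : q.comp a = q.comp (a.comp b) := ContinuousMap.ext fun z => hq1 z.2
  have hqb : q.comp b = q.comp (a.comp b) := ContinuousMap.ext fun z => hq0 z.1
  have hdesc : ∀ f : C(Circle × X, ℂ), pb a f = pb b f → ∃ g, pb q g = f := fun f hf => by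
    have h : ∀ t x, f (1, x) = f (t, x0) := fun t x => DFunLike.congr_fun hf (t, x)
    exact hql f (fun x => h 1 x) fun t => (h t x0).symm
  constructor
  · intro H
    refine ⟨GLtrans_of_retract i π rfl H, ?_⟩
    rw [GLtrans_iff_units _ _ (Pi.single 0 1) (single_mem_Lg _ _ 0)] at H ⊢
    intro v hv
    obtain ⟨M, hM⟩ := H _ (pb_mem_Lg q hv)
    have h1 : ∀ f : C(Circle × X, Circle × X),
        (glMap f M).1.mulVec (Pi.single 0 1) = pb (q.comp f) ∘ v := fun f => by
      rw [← pb_single f 0, glMap_mulVec, hM, pb_comp]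
    have ha := h1 a
    have hb := h1 b
    have hc := h1 (a.comp b)
    rw [hqa] at ha
    rw [hqb] at hb
    -- the correction factors fix the base vector; on both halves of the wedge `N` is `M (1, x0)`
    let N := M * (glMap a M)⁻¹ * glMap (a.comp b) M * (glMap b M)⁻¹ * glMap (a.comp b) M
    have hN : N.1.mulVec (Pi.single 0 1) = pb q ∘ v := by
      simp only [N, Units.val_mul, ← Matrix.mulVec_mulVec]
      rw [hc, inv_mulVec_eq hb, hc, inv_mulVec_eq ha, hM]
    have hNw : glMap a N = glMap b N := by
      have h2 : glMap a N = glMap (a.comp b) M := by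
        simp only [N, map_mul, map_inv, glMap_comp]
        change glMap a M * (glMap a M)⁻¹ * glMap (a.comp b) M * (glMap (a.comp b) M)⁻¹ *
          glMap (a.comp b) M = _
        group
      have h3 : glMap b N = glMap (a.comp b) M := by
        simp only [N, map_mul, map_inv, glMap_comp]
        change glMap b M * (glMap (a.comp b) M)⁻¹ * glMap (a.comp b) M * (glMap b M)⁻¹ *
          glMap (a.comp b) M = _
        group
      rw [h2, h3]
    have hdM : ∀ P : (Matrix (Fin (k + 1)) (Fin (k + 1)) C(Circle × X, ℂ))ˣ,
        glMap a P = glMap b P →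
        ∃ K : Matrix (Fin (k + 1)) (Fin (k + 1)) C(Susp X x0, ℂ),
          (pb q).mapMatrix K = P.1 := fun P hP => by
      have h0 : (glMap a P).1 = (glMap b P).1 := by rw [hP]
      choose K hK using fun r s => hdesc (P.1 r s) (congrFun (congrFun h0 r) s)
      exact ⟨K, Matrix.ext hK⟩
    obtain ⟨K, hK⟩ := hdM N hNw
    obtain ⟨K', hK'⟩ := hdM N⁻¹ (by rw [map_inv, map_inv, hNw])
    have hinjM : Function.Injective ((pb q).mapMatrix (m := Fin (k + 1))) := fun A B h =>
      Matrix.ext fun r s => hinj (congrFun (congrFun h r) s)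
    refine ⟨⟨K, K', hinjM ?_, hinjM ?_⟩, ?_⟩
    · rw [map_mul, hK, hK', map_one, ← Units.val_mul, mul_inv_cancel, Units.val_one]
    · rw [map_mul, hK, hK', map_one, ← Units.val_mul, inv_mul_cancel, Units.val_one]
    · ext1 r
      apply hinj
      have h4 := (pb q).map_mulVec K (Pi.single 0 1) r
      rw [pb_single] at h4
      rw [h4]
      refine Eq.trans ?_ (congrFun hN r)
      rw [← hK]
      rfl
  · rintro ⟨HX, HS⟩
    have HT := GLtrans_circle (k + 1)
    rw [GLtrans_iff_units _ _ (Pi.single 0 1) (single_mem_Lg _ _ 0)] at HX HS HT ⊢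
    intro v hv
    obtain ⟨N, hN⟩ := HX _ (pb_mem_Lg i hv)
    have hN' : (glMap π N).1.mulVec (Pi.single 0 1) = pb a ∘ v := by
      rw [← pb_single π 0, glMap_mulVec, hN]; rfl
    obtain ⟨v₁, hv₁, rfl⟩ : ∃ v₁ ∈ Lg (k + 1) C(Circle × X, ℂ), (glMap π N).1.mulVec v₁ = v :=
      ⟨_, mulVec_mem_Lg hv (glMap π N)⁻¹, by
        rw [Matrix.mulVec_mulVec, Units.mul_inv, Matrix.one_mulVec]⟩
    have ha₁ : pb a ∘ v₁ = Pi.single 0 1 := by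
      rw [← glMap_mulVec] at hN'
      have h := inv_mulVec_eq hN'
      rw [show (glMap π N)⁻¹ = (glMap a (glMap π N))⁻¹ from rfl, inv_mulVec_eq rfl] at h
      exact h
    obtain ⟨L, hL⟩ := HT _ (pb_mem_Lg j hv₁)
    have hL₁ : (glMap p L).1.mulVec (Pi.single 0 1) = pb b ∘ v₁ := by
      rw [← pb_single p 0, glMap_mulVec, hL]; rfl
    have hL₂ : (glMap a (glMap p L)).1.mulVec (Pi.single 0 1) = Pi.single 0 1 := by
      rw [← pb_single a 0, glMap_mulVec, hL₁, pb_single]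
      change pb b ∘ (pb a ∘ v₁) = _
      rw [ha₁, pb_single]
    -- normalise the loop of matrices to be `1` at the base point
    let L' := glMap p L * (glMap a (glMap p L))⁻¹
    have haL : glMap a L' = 1 := by
      have h1 : glMap a (glMap a (glMap p L)) = glMap a (glMap p L) := rfl
      rw [map_mul, map_inv, h1, mul_inv_cancel]
    have hbL : glMap b L' = L' := by
      have h1 : glMap b (glMap p L) = glMap p L := rfl
      have h2 : glMap b (glMap a (glMap p L)) = glMap a (glMap p L) := rfl
      rw [map_mul, map_inv, h1, h2]
    have hL' : L'.1.mulVec (Pi.single 0 1) = pb b ∘ v₁ := by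
      rw [Units.val_mul, ← Matrix.mulVec_mulVec, inv_mulVec_eq hL₂, hL₁]
    obtain ⟨v₂, hv₂, rfl⟩ : ∃ v₂ ∈ Lg (k + 1) C(Circle × X, ℂ), L'.1.mulVec v₂ = v₁ :=
      ⟨_, mulVec_mem_Lg hv₁ L'⁻¹, by rw [Matrix.mulVec_mulVec, Units.mul_inv, Matrix.one_mulVec]⟩
    have ha₂ : pb a ∘ v₂ = Pi.single 0 1 := by
      rw [← glMap_mulVec, haL, Units.val_one, Matrix.one_mulVec] at ha₁
      exact ha₁
    have hb₂ : pb b ∘ v₂ = Pi.single 0 1 := by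
      rw [← glMap_mulVec, hbL] at hL'
      rw [← inv_mulVec_eq hL', inv_mulVec_eq rfl]
    choose s hs using fun r => hdesc (v₂ r) (congrFun (ha₂.trans hb₂.symm) r)
    have hs' : pb q ∘ s = v₂ := funext hs
    obtain ⟨K, hK⟩ := HS s ((mem_Lg_iff s).2 fun y => by
      obtain ⟨z, rfl⟩ := hqs y
      obtain ⟨r, hr⟩ := (mem_Lg_iff v₂).1 hv₂ z
      exact ⟨r, by rwa [← hs r] at hr⟩)
    refine ⟨glMap π N * L' * glMap q K, ?_⟩
    rw [Units.val_mul, Units.val_mul, ← Matrix.mulVec_mulVec, ← Matrix.mulVec_mulVec,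
      ← pb_single q 0, glMap_mulVec, hK, hs']

/-- **Theorem.** For a pointed compact Hausdorff space `(X, x0)`,
`gsr(C(𝕋 × X)) = max {gsr(C(X)), gsr(C(ΣX))}`. -/
theorem gsr_circle_prod_eq {X : Type*} [TopologicalSpace X] [CompactSpace X] [T2Space X]
    (x0 : X) :
    gsr (ContinuousMap (Circle × X) ℂ)
      = max (gsr (ContinuousMap X ℂ)) (gsr (ContinuousMap (Susp X x0) ℂ)) := by
  have key := fun m => GLtrans_circle_prod_iff x0 m
  apply le_antisymm
  · rcases eq_or_ne (gsr C(X, ℂ)) ⊤ with h | h1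
    · simp [h]
    rcases eq_or_ne (gsr C(Susp X x0, ℂ)) ⊤ with h | h2
    · simp [h]
    have mem : ∀ {S : Set ℕ∞}, sInf S ≠ ⊤ → sInf S ∈ S := fun {S} h => by
      apply csInf_mem
      by_contra hS
      rw [Set.not_nonempty_iff_eq_empty] at hS
      exact h (by rw [hS, sInf_empty])
    obtain ⟨n₁, e₁, l₁, t₁⟩ := mem h1
    obtain ⟨n₂, e₂, l₂, t₂⟩ := mem h2
    refine sInf_le ⟨max n₁ n₂, ?_, l₁.trans (le_max_left _ _), fun m hm => (key m).2
      ⟨t₁ m ((le_max_left _ _).trans hm), t₂ m ((le_max_right _ _).trans hm)⟩⟩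
    rw [gsr, e₁, gsr, e₂]
    norm_cast
  · refine max_le (sInf_le_sInf ?_) (sInf_le_sInf ?_) <;> rintro _ ⟨n, rfl, hn, h⟩
    · exact ⟨n, rfl, hn, fun m hm => ((key m).1 (h m hm)).1⟩
    · exact ⟨n, rfl, hn, fun m hm => ((key m).1 (h m hm)).2⟩

end
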